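/- Let L ⊆ Σ* be Wheeler with respect to (Σ,≺), let A be the minimum DFA recognizing L with n states, and set d = n + n². Let Pref(L)^{≤d} = {α ∈ Pref(L) : |α| ≤ d}, listed in co-lexicographic order as α₁ ≺ α₂ ≺ … ≺ α_k. Then for every 1 ≤ j < k: α_j ≡^c_L α_{j+1} if and only if α_j ≡_L α_{j+1} and α_j and α_{j+1} end with the same character. -/

import Mathlib

/-!
Common framework: words over an ordered alphabet, co-lexicographic order,
(partial) DFAs and NFAs, Wheeler automata and Wheeler languages,
following "Ordering regular languages: a danger zone".
-/

namespace WheelerPaper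

/-- Strict co-lexicographic order on words: compare the reverses lexicographically. -/
def Colex {A : Type} [LinearOrder A] (x y : List A) : Prop :=
  List.Lex (· < ·) x.reverse y.reverse

/-- Non-strict co-lexicographic order. -/
def ColexLE {A : Type} [LinearOrder A] (x y : List A) : Prop :=
  Colex x y ∨ x = y

/-- Right context `α⁻¹L` of a word `α` with respect to a language `L`. -/
def rc {A : Type} (L : Set (List A)) (α : List A) : Set (List A) :=
  {γ | α ++ γ ∈ L}

/-- `Pref L`: the set of prefixes of words of `L`. -/
def Pref {A : Type} (L : Set (List A)) : Set (List A) :=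
  {α | ∃ β, α ++ β ∈ L}

/-- `wpow γ i` is `γ^i`, the `i`-fold concatenation of the word `γ`. -/
def wpow {A : Type} (γ : List A) : ℕ → List A
  | 0 => []
  | n + 1 => γ ++ wpow γ n

/-- A DFA with a possibly partial transition function. -/
structure PDFA (A : Type) (Q : Type) where
  init : Q
  trans : Q → A → Option Q
  accept : Q → Prop

/-- Extended (partial) transition function of a `PDFA`. -/
def PDFA.evalFrom {A Q : Type} (M : PDFA A Q) : Q → List A → Option Q
  | q, [] => some q
  | q, a :: w => (M.trans q a).bind fun q' => PDFA.evalFrom M q' w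

/-- The language accepted by a `PDFA`. -/
def PDFA.accepts {A Q : Type} (M : PDFA A Q) : Set (List A) :=
  {w | ∃ q, M.evalFrom M.init w = some q ∧ M.accept q}

/-- A `PDFA` is trim if every state is reachable from the initial state and
every state can reach some accepting state. -/
def PDFA.Trim {A Q : Type} (M : PDFA A Q) : Prop :=
  (∀ q : Q, ∃ α, M.evalFrom M.init α = some q) ∧
  (∀ q : Q, ∃ α q', M.evalFrom q α = some q' ∧ M.accept q')

/-- `r` is a Wheeler order for the DFA `M`: a strict total order on states whose
minimum is the initial state, the initial state has no incoming transitions, and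
the two Wheeler conditions hold. -/
def IsWheelerOrder {A Q : Type} [LinearOrder A] (M : PDFA A Q) (r : Q → Q → Prop) : Prop :=
  IsStrictTotalOrder Q r ∧
  (∀ q : Q, q ≠ M.init → r M.init q) ∧
  (∀ (q : Q) (a : A), M.trans q a ≠ some M.init) ∧
  (∀ (u₁ : Q) (a₁ : A) (v₁ : Q) (u₂ : Q) (a₂ : A) (v₂ : Q),
     M.trans u₁ a₁ = some v₁ → M.trans u₂ a₂ = some v₂ →
     (a₁ < a₂ → r v₁ v₂) ∧ (a₁ = a₂ → r u₁ u₂ → (r v₁ v₂ ∨ v₁ = v₂)))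

/-- A language is Wheeler (w.r.t. the given order on the alphabet) if it is
recognized by some Wheeler DFA. -/
def IsWheelerLang {A : Type} [LinearOrder A] (L : Set (List A)) : Prop :=
  ∃ (n : ℕ) (M : PDFA A (Fin n)) (r : Fin n → Fin n → Prop),
    IsWheelerOrder M r ∧ M.accepts = L

/-- A language is regular if it is recognized by some finite-state (partial) DFA. -/
def IsRegular {A : Type} (L : Set (List A)) : Prop :=
  ∃ (k : ℕ) (M : PDFA A (Fin k)), M.accepts = L

/-- The input-consistent convex refinement `≡^c_L` of the Myhill–Nerode
equivalence: same right context, same last character (or both empty), and every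
word of `Pref L` co-lexicographically between the two words has the same right
context. -/
def EquivC {A : Type} [LinearOrder A] (L : Set (List A)) (α β : List A) : Prop :=
  rc L α = rc L β ∧ α.getLast? = β.getLast? ∧
  ∀ γ ∈ Pref L,
    ((ColexLE α γ ∧ ColexLE γ β) ∨ (ColexLE β γ ∧ ColexLE γ α)) →
    rc L γ = rc L α

/-- An NFA with a single initial state. -/
structure NFA' (A : Type) (Q : Type) where
  init : Q
  trans : Q → A → Set Q
  accept : Q → Prop

/-- One step of an `NFA'` on a set of states. -/
def NFA'.stepSet {A Q : Type} (M : NFA' A Q) (S : Set Q) (a : A) : Set Q :=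
  {q | ∃ p ∈ S, q ∈ M.trans p a}

/-- Extended transition function of an `NFA'` on sets of states. -/
def NFA'.evalFrom {A Q : Type} (M : NFA' A Q) : Set Q → List A → Set Q
  | S, [] => S
  | S, a :: w => NFA'.evalFrom M (M.stepSet S a) w

/-- The language accepted by an `NFA'`. -/
def NFA'.accepts {A Q : Type} (M : NFA' A Q) : Set (List A) :=
  {w | ∃ q ∈ M.evalFrom {M.init} w, M.accept q}

/-- An `NFA'` is trim if every state is reachable from the initial state and
every state can reach some accepting state. -/
def NFA'.Trim {A Q : Type} (M : NFA' A Q) : Prop :=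
  (∀ q : Q, ∃ α, q ∈ M.evalFrom {M.init} α) ∧
  (∀ q : Q, ∃ α, ∃ q' ∈ M.evalFrom {q} α, M.accept q')

/-- `r` is a Wheeler order for the NFA `M`. -/
def IsWheelerNFAOrder {A Q : Type} [LinearOrder A] (M : NFA' A Q) (r : Q → Q → Prop) : Prop :=
  IsStrictTotalOrder Q r ∧
  (∀ q : Q, q ≠ M.init → r M.init q) ∧
  (∀ (q : Q) (a : A), M.init ∉ M.trans q a) ∧
  (∀ (u₁ : Q) (a₁ : A) (v₁ : Q) (u₂ : Q) (a₂ : A) (v₂ : Q),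
     v₁ ∈ M.trans u₁ a₁ → v₂ ∈ M.trans u₂ a₂ →
     (a₁ < a₂ → r v₁ v₂) ∧ (a₁ = a₂ → r u₁ u₂ → (r v₁ v₂ ∨ v₁ = v₂)))

/-- `I` is an interval with respect to the strict order `r`. -/
def IsIntervalRel {Q : Type} (r : Q → Q → Prop) (I : Set Q) : Prop :=
  ∀ x y z : Q, (r x y ∨ x = y) → (r y z ∨ y = z) → x ∈ I → z ∈ I → y ∈ I

/-- The class of star-free languages: built from `∅`, `{ε}` and the singletons
`{a}` by union, concatenation and complement. -/
inductive StarFree {A : Type} : Set (List A) → Prop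
  | empty : StarFree ∅
  | eps : StarFree {[]}
  | single (a : A) : StarFree {[a]}
  | union {L₁ L₂ : Set (List A)} : StarFree L₁ → StarFree L₂ → StarFree (L₁ ∪ L₂)
  | concat {L₁ L₂ : Set (List A)} : StarFree L₁ → StarFree L₂ →
      StarFree {w | ∃ u v, u ∈ L₁ ∧ v ∈ L₂ ∧ w = u ++ v}
  | compl {L : Set (List A)} : StarFree L → StarFree Lᶜ


/-- The language of all words over the sub-alphabet `S`. -/
def wordsOver {A : Type} (S : Set A) : Language A := {w | ∀ x ∈ w, x ∈ S}


section Helpers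

theorem colex_trans {A : Type} [LinearOrder A] {x y z : List A} (h1 : Colex x y)
    (h2 : Colex y z) : Colex x z := by
  have a : x.reverse < y.reverse := h1
  have b : y.reverse < z.reverse := h2
  exact (lt_trans a b : x.reverse < z.reverse)

theorem colex_irrefl {A : Type} [LinearOrder A] {x : List A} (h1 : Colex x x) : False := by
  have a : x.reverse < x.reverse := h1
  exact lt_irrefl _ a

theorem colex_total {A : Type} [LinearOrder A] (x y : List A) :
    Colex x y ∨ x = y ∨ Colex y x := by
  rcases lt_trichotomy x.reverse y.reverse with h | h | h
  · exact Or.inl h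
  · exact Or.inr (Or.inl (List.reverse_injective h))
  · exact Or.inr (Or.inr h)

theorem lex_cons_cons {A : Type} [LinearOrder A] (a b : A) (x y : List A) :
    List.Lex (· < ·) (a :: x) (b :: y) ↔ a < b ∨ (a = b ∧ List.Lex (· < ·) x y) := by
  constructor
  · intro h
    cases h with
    | cons h => exact Or.inr ⟨rfl, h⟩
    | rel h => exact Or.inl h
  · rintro (h | ⟨rfl, h⟩)
    · exact List.Lex.rel h
    · exact List.Lex.cons h

theorem lex_append {A : Type} [LinearOrder A] (z x y : List A) :
    List.Lex (· < ·) (z ++ x) (z ++ y) ↔ List.Lex (· < ·) x y := by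
  induction z with
  | nil => simp
  | cons a z ih => rw [List.cons_append, List.cons_append, lex_cons_cons, ih]; simp

theorem colex_append {A : Type} [LinearOrder A] (x y z : List A) :
    Colex (x ++ z) (y ++ z) ↔ Colex x y := by
  unfold Colex
  rw [List.reverse_append, List.reverse_append, lex_append]

theorem lex_not_prefix_left {A : Type} [LinearOrder A] (z : List A) :
    ∀ (x g h : List A), ¬ z <+: x → List.Lex (· < ·) x (z ++ g) →
      List.Lex (· < ·) x (z ++ h) := by
  induction z with
  | nil => intro x g h hn; simp at hn
  | cons a z ih =>
    intro x g h hn hl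
    cases x with
    | nil => simp
    | cons b x =>
      simp only [List.cons_append, lex_cons_cons] at hl ⊢
      rcases hl with hl | ⟨rfl, hl⟩
      · exact Or.inl hl
      · refine Or.inr ⟨rfl, ih x g h ?_ hl⟩
        simpa [List.cons_prefix_cons] using hn

theorem lex_not_prefix_right {A : Type} [LinearOrder A] (z : List A) :
    ∀ (x g h : List A), ¬ z <+: x → List.Lex (· < ·) (z ++ g) x →
      List.Lex (· < ·) (z ++ h) x := by
  induction z with
  | nil => intro x g h hn; simp at hn
  | cons a z ih =>
    intro x g h hn hl
    cases x with
    | nil => simp at hl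
    | cons b x =>
      simp only [List.cons_append, lex_cons_cons] at hl ⊢
      rcases hl with hl | ⟨rfl, hl⟩
      · exact Or.inl hl
      · refine Or.inr ⟨rfl, ih x g h ?_ hl⟩
        simpa [List.cons_prefix_cons] using hn

theorem colex_not_suffix_left {A : Type} [LinearOrder A] {z x g : List A} (h : List A)
    (hn : ¬ z <:+ x) (hl : Colex x (g ++ z)) : Colex x (h ++ z) := by
  unfold Colex at *
  rw [List.reverse_append] at *
  exact lex_not_prefix_left _ _ _ _ (by simpa [List.reverse_prefix] using hn) hl

theorem colex_not_suffix_right {A : Type} [LinearOrder A] {z x g : List A} (h : List A)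
    (hn : ¬ z <:+ x) (hl : Colex (g ++ z) x) : Colex (h ++ z) x := by
  unfold Colex at *
  rw [List.reverse_append] at *
  exact lex_not_prefix_right _ _ _ _ (by simpa [List.reverse_prefix] using hn) hl

/-- state reached from the initial state -/
def ev {A Q : Type} (M : PDFA A Q) (w : List A) : Option Q := M.evalFrom M.init w

theorem evalFrom_append {A Q : Type} (M : PDFA A Q) (x y : List A) :
    ∀ q, M.evalFrom q (x ++ y) = (M.evalFrom q x).bind fun q' => M.evalFrom q' y := by
  induction x with
  | nil => intro q; simp [PDFA.evalFrom]
  | cons a x ih =>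
    intro q
    simp only [List.cons_append, PDFA.evalFrom]
    cases M.trans q a with
    | none => simp
    | some p => simp [ih]

theorem ev_append {A Q : Type} (M : PDFA A Q) (x y : List A) :
    ev M (x ++ y) = (ev M x).bind fun q' => M.evalFrom q' y := evalFrom_append M x y _

theorem ev_congr {A Q : Type} (M : PDFA A Q) {x x' : List A} (y : List A)
    (h : ev M x = ev M x') : ev M (x ++ y) = ev M (x' ++ y) := by
  rw [ev_append, ev_append, h]

theorem rc_of_ev {A Q : Type} {L : Set (List A)} (M : PDFA A Q) (hM : M.accepts = L)
    {x x' : List A} (h : ev M x = ev M x') : rc L x = rc L x' := by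
  subst hM
  ext t
  have := ev_congr M t h
  unfold ev at this
  simp [rc, PDFA.accepts, this]

theorem ev_some {A Q : Type} {L : Set (List A)} (M : PDFA A Q) (hM : M.accepts = L)
    {x : List A} (y : List A) (h : x ++ y ∈ Pref L) : ∃ q, ev M x = some q := by
  subst hM
  obtain ⟨t, q, h, -⟩ := h
  have h' : ev M (x ++ (y ++ t)) = some q := by rw [← List.append_assoc]; exact h
  rw [ev_append] at h'
  cases hx : ev M x with
  | none => simp [hx] at h'
  | some p => exact ⟨p, rfl⟩

theorem pref_of_rc {A : Type} {L : Set (List A)} {x x' : List A} (h : rc L x = rc L x')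
    (hx : x ∈ Pref L) : x' ∈ Pref L := by
  obtain ⟨t, ht⟩ := hx
  have : t ∈ rc L x := ht
  rw [h] at this
  exact ⟨t, this⟩

theorem wheeler_mono {A Q : Type} [LinearOrder A] (N : PDFA A Q) (r : Q → Q → Prop)
    (hr : IsWheelerOrder N r) : ∀ (x y : List A) (a b : Q), Colex x y → ev N x = some a →
      ev N y = some b → r a b ∨ a = b := by
  intro x
  induction x using List.reverseRecOn with
  | nil =>
    intro y a b h ha hb
    simp only [ev, PDFA.evalFrom, Option.some.injEq] at ha
    subst ha
    by_cases hbi : b = N.init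
    · exact Or.inr hbi.symm
    · exact Or.inl (hr.2.1 b hbi)
  | append_singleton x c ih =>
    intro y a b h ha hb
    rcases List.eq_nil_or_concat y with rfl | ⟨y, d, rfl⟩
    · simp [Colex] at h
    · rw [ev_append] at ha
      rw [List.concat_eq_append] at *
      rw [ev_append] at hb
      obtain ⟨a', ha', ha⟩ := Option.bind_eq_some_iff.1 ha
      obtain ⟨b', hb', hb⟩ := Option.bind_eq_some_iff.1 hb
      have ta : N.trans a' c = some a := by simpa [PDFA.evalFrom] using ha
      have tb : N.trans b' d = some b := by simpa [PDFA.evalFrom] using hb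
      have key := hr.2.2.2 a' c a b' d b ta tb
      simp only [Colex, List.reverse_append, List.reverse_cons, List.reverse_nil, List.nil_append,
        List.cons_append, lex_cons_cons] at h
      rcases h with h | ⟨rfl, h⟩
      · exact Or.inl (key.1 h)
      · rcases ih y a' b' h ha' hb' with h' | rfl
        · exact key.2 rfl h'
        · rw [ta] at tb; exact Or.inr (by simpa using tb)

theorem ev_wpow {A Q : Type} (M : PDFA A Q) {X y : List A} (h : ev M X = ev M (X ++ y)) (i : ℕ) :
    ev M (X ++ wpow y i) = ev M X := by
  induction i with
  | zero => simp [wpow]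
  | succ i ih =>
    rw [wpow, ← List.append_assoc, ← ev_congr M (wpow y i) h, ih]

/-- no strict chain of states of type `ℕ` -/
theorem no_chain {Q : Type} [Finite Q] (r : Q → Q → Prop) [IsStrictTotalOrder Q r]
    (s : ℕ → Q) (h : ∀ i, r (s i) (s (i + 1))) : False := by
  have hlt : ∀ i j, i < j → r (s i) (s j) := by
    intro i j hij
    induction hij with
    | refl => exact h i
    | step _ ih => exact _root_.trans ih (h _)
  have inj : Function.Injective s := by
    intro i j hij
    rcases lt_trichotomy i j with hl | hl | hl
    · have := hlt _ _ hl; rw [hij] at this; exact absurd this (irrefl _)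
    · exact hl
    · have := hlt _ _ hl; rw [hij] at this; exact absurd this (irrefl _)
  exact not_injective_infinite_finite s inj

theorem no_inc {A : Type} [LinearOrder A] {L : Set (List A)} (hW : IsWheelerLang L)
    {n : ℕ} (M : PDFA A (Fin n)) (hM : M.accepts = L) {X Y y z : List A}
    (hX : ev M X = ev M (X ++ y)) (hY : ev M Y = ev M (Y ++ y))
    (hXp : X ++ z ∈ Pref L) (hYp : Y ++ z ∈ Pref L) (hne : rc L (X ++ z) ≠ rc L (Y ++ z))
    (h : (Colex X Y ∧ Colex Y (X ++ y)) ∨ (Colex Y X ∧ Colex (X ++ y) Y)) : False := by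
  obtain ⟨m, N, r, hr, hN⟩ := hW
  have := hr.1
  have rX : ∀ i, rc L (X ++ z) = rc L (X ++ wpow y i ++ z) := fun i =>
    rc_of_ev M hM (ev_congr M z (ev_wpow M hX i).symm)
  have rY : ∀ i, rc L (Y ++ z) = rc L (Y ++ wpow y i ++ z) := fun i =>
    rc_of_ev M hM (ev_congr M z (ev_wpow M hY i).symm)
  have eX : ∀ i, ∃ q, ev N (X ++ wpow y i) = some q := fun i =>
    ev_some N hN z (pref_of_rc (rX i) hXp)
  have eY : ∀ i, ∃ q, ev N (Y ++ wpow y i) = some q := fun i =>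
    ev_some N hN z (pref_of_rc (rY i) hYp)
  choose sX hsX using eX
  choose sY hsY using eY
  have hd : ∀ i, sX i ≠ sY i := by
    intro i hi
    apply hne
    rw [rX i, rY i]
    exact rc_of_ev N hN (ev_congr N z (by rw [hsX, hsY, hi]))
  have hsX' : ∀ i, ev N (X ++ y ++ wpow y i) = some (sX (i + 1)) := by
    intro i; rw [← hsX (i + 1), wpow, List.append_assoc]
  rcases h with ⟨h1, h2⟩ | ⟨h1, h2⟩
  · apply no_chain r sX
    intro i
    have a := wheeler_mono N r hr _ _ _ _ ((colex_append _ _ (wpow y i)).2 h1) (hsX i) (hsY i)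
    have b := wheeler_mono N r hr _ _ _ _ ((colex_append _ _ (wpow y i)).2 h2) (hsY i) (hsX' i)
    have a' := a.resolve_right (hd i)
    rcases b with b | b
    · exact _root_.trans a' b
    · rw [← b]; exact a'
  · have : IsStrictTotalOrder (Fin m) (Function.swap r) := inferInstance
    apply no_chain (Function.swap r) sX
    intro i
    have a := wheeler_mono N r hr _ _ _ _ ((colex_append _ _ (wpow y i)).2 h1) (hsY i) (hsX i)
    have b := wheeler_mono N r hr _ _ _ _ ((colex_append _ _ (wpow y i)).2 h2) (hsX' i) (hsY i)
    have a' := a.resolve_right (hd i).symm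
    show r _ _
    rcases b with b | b
    · exact _root_.trans b a'
    · rw [b]; exact a'

theorem wpow_succ_right {A : Type} (y : List A) (i : ℕ) : wpow y (i + 1) = wpow y i ++ y := by
  induction i with
  | zero => simp [wpow]
  | succ i ih =>
    have h : wpow y (i + 1 + 1) = y ++ wpow y (i + 1) := rfl
    have h' : wpow y (i + 1) = y ++ wpow y i := rfl
    rw [h, ih, ← List.append_assoc, ← h', ih]

theorem strip_pow {A : Type} {y : List A} (hy : y ≠ []) : ∀ (k : ℕ) (v : List A), v.length ≤ k →
    ∃ v' m, v = v' ++ wpow y m ∧ ¬ y <:+ v' := by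
  intro k
  induction k with
  | zero =>
    intro v hv
    refine ⟨v, 0, by simp [wpow], ?_⟩
    have : v = [] := by simpa using hv
    subst this
    simpa using hy
  | succ k ih =>
    intro v hv
    by_cases h : y <:+ v
    · obtain ⟨t, rfl⟩ := h
      have := List.length_pos_iff.2 hy
      obtain ⟨v', m, rfl, h2⟩ := ih t (by simp at hv; omega)
      exact ⟨v', m + 1, by rw [wpow_succ_right, List.append_assoc], h2⟩
    · exact ⟨v, 0, by simp [wpow], h⟩

theorem below_pow {A : Type} [LinearOrder A] {y v : List A} (hy : y ≠ [])
    (h : Colex v (v ++ y)) : ∃ m, ∀ w, Colex v (w ++ wpow y m) := by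
  obtain ⟨v', m, rfl, hn⟩ := strip_pow hy v.length v le_rfl
  refine ⟨m + 1, fun w => ?_⟩
  have h1 : Colex v' (v' ++ y) := by
    rw [List.append_assoc, ← wpow_succ_right, wpow, ← List.append_assoc, colex_append] at h
    exact h
  have := colex_not_suffix_left w hn h1
  rw [wpow, ← List.append_assoc, colex_append]
  exact this

theorem above_pow {A : Type} [LinearOrder A] {y v : List A} (hy : y ≠ [])
    (h : Colex (v ++ y) v) : ∃ m, ∀ w, Colex (w ++ wpow y m) v := by
  obtain ⟨v', m, rfl, hn⟩ := strip_pow hy v.length v le_rfl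
  refine ⟨m + 1, fun w => ?_⟩
  have h1 : Colex (v' ++ y) v' := by
    rw [List.append_assoc, ← wpow_succ_right, wpow, ← List.append_assoc, colex_append] at h
    exact h
  have := colex_not_suffix_right w hn h1
  rw [wpow, ← List.append_assoc, colex_append]
  exact this

theorem colex_loop {A : Type} [LinearOrder A] {y : List A} (hy : y ≠ []) (v : List A) :
    Colex v (v ++ y) ∨ Colex (v ++ y) v := by
  rcases colex_total v (v ++ y) with h | h | h
  · exact Or.inl h
  · exact absurd (by simpa using h) hy
  · exact Or.inr h

theorem loop_sep {A : Type} [LinearOrder A] {L : Set (List A)} (hW : IsWheelerLang L)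
    {n : ℕ} (M : PDFA A (Fin n)) (hM : M.accepts = L) {u v y z : List A} (hy : y ≠ [])
    (hu : ev M u = ev M (u ++ y)) (hv : ev M v = ev M (v ++ y))
    (hup : u ++ z ∈ Pref L) (hvp : v ++ z ∈ Pref L) (hne : rc L (u ++ z) ≠ rc L (v ++ z))
    (h : Colex u v) : Colex u (u ++ y) ∧ Colex (v ++ y) v := by
  constructor
  · refine (colex_loop hy u).resolve_right fun h1 => ?_
    obtain ⟨m, hm⟩ := above_pow hy h1
    exact no_inc hW M hM (y := wpow y m) (ev_wpow M hv m).symm (ev_wpow M hu m).symm hvp hup hne.symm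
      (Or.inr ⟨h, hm v⟩)
  · refine (colex_loop hy v).resolve_left fun h1 => ?_
    obtain ⟨m, hm⟩ := below_pow hy h1
    exact no_inc hW M hM (y := wpow y m) (ev_wpow M hu m).symm (ev_wpow M hv m).symm hup hvp hne
      (Or.inl ⟨h, hm u⟩)

theorem count_core {V : Type} [DecidableEq V] (p r : ℕ → V) (Lf : ℕ → ℕ → Prop) :
    ∀ (c : ℕ) (E : Finset ℕ), E.card ≤ c → E.Nonempty →
    (∀ e ∈ E, ∀ f ∈ E, e < f → p e = p f → Lf e f) →
    (∀ e ∈ E, ∀ f ∈ E, e < f → r e = r f → ¬ Lf e f) →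
    (∀ e ∈ E, ∀ f ∈ E, ∀ g ∈ E, e < f → e < g → Lf e f → ¬ Lf e g → p f ≠ p g ∧ r f ≠ r g) →
    E.card + 1 ≤ (E.image p).card + (E.image r).card := by
  classical
  intro c
  induction c with
  | zero => intro E hc hE; have := hE.card_pos; omega
  | succ c ih =>
    intro E hc hE h1 h2 h3
    set e := E.min' hE with he
    have heE : e ∈ E := E.min'_mem hE
    have hlt : ∀ f ∈ E.erase e, e < f := by
      intro f hf
      exact lt_of_le_of_ne (E.min'_le f (Finset.mem_of_mem_erase hf)) (Finset.ne_of_mem_erase hf).symm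
    set S := (E.erase e).filter (fun f => Lf e f) with hS
    set T := (E.erase e).filter (fun f => ¬ Lf e f) with hT
    have hcard : S.card + T.card + 1 = E.card := by
      rw [hS, hT, Finset.card_filter_add_card_filter_not, Finset.card_erase_of_mem heE]
      have := hE.card_pos; omega
    have mS : ∀ f ∈ S, f ∈ E ∧ e < f ∧ Lf e f := by
      intro f hf
      have := Finset.mem_filter.1 hf
      exact ⟨Finset.mem_of_mem_erase this.1, hlt f this.1, this.2⟩
    have mT : ∀ f ∈ T, f ∈ E ∧ e < f ∧ ¬ Lf e f := by
      intro f hf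
      have := Finset.mem_filter.1 hf
      exact ⟨Finset.mem_of_mem_erase this.1, hlt f this.1, this.2⟩
    have bS : S.card + 1 ≤ (insert (p e) (S.image p)).card + (S.image r).card := by
      rcases S.eq_empty_or_nonempty with h | h
      · rw [h]; simp
      · have := ih S (by omega) h (fun a ha b hb => h1 a (mS a ha).1 b (mS b hb).1)
          (fun a ha b hb => h2 a (mS a ha).1 b (mS b hb).1)
          (fun a ha b hb d hd => h3 a (mS a ha).1 b (mS b hb).1 d (mS d hd).1)
        have := Finset.card_le_card (Finset.subset_insert (p e) (S.image p))
        omega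
    have bT : T.card + 1 ≤ (T.image p).card + (insert (r e) (T.image r)).card := by
      rcases T.eq_empty_or_nonempty with h | h
      · rw [h]; simp
      · have := ih T (by omega) h (fun a ha b hb => h1 a (mT a ha).1 b (mT b hb).1)
          (fun a ha b hb => h2 a (mT a ha).1 b (mT b hb).1)
          (fun a ha b hb d hd => h3 a (mT a ha).1 b (mT b hb).1 d (mT d hd).1)
        have := Finset.card_le_card (Finset.subset_insert (r e) (T.image r))
        omega
    have dp : Disjoint (insert (p e) (S.image p)) (T.image p) := by
      rw [Finset.disjoint_left]
      intro x hx hx'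
      obtain ⟨g, hg, rfl⟩ := Finset.mem_image.1 hx'
      have hg' := mT g hg
      rcases Finset.mem_insert.1 hx with hx | hx
      · exact hg'.2.2 (h1 e heE g hg'.1 hg'.2.1 hx.symm)
      · obtain ⟨f, hf, hfg⟩ := Finset.mem_image.1 hx
        have hf' := mS f hf
        exact (h3 e heE f hf'.1 g hg'.1 hf'.2.1 hg'.2.1 hf'.2.2 hg'.2.2).1 hfg
    have dr : Disjoint (S.image r) (insert (r e) (T.image r)) := by
      rw [Finset.disjoint_left]
      intro x hx' hx
      obtain ⟨g, hg, rfl⟩ := Finset.mem_image.1 hx'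
      have hg' := mS g hg
      rcases Finset.mem_insert.1 hx with hx | hx
      · exact h2 e heE g hg'.1 hg'.2.1 hx.symm hg'.2.2
      · obtain ⟨f, hf, hfg⟩ := Finset.mem_image.1 hx
        have hf' := mT f hf
        exact (h3 e heE g hg'.1 f hf'.1 hg'.2.1 hf'.2.1 hg'.2.2 hf'.2.2).2 hfg.symm
    have cp : (insert (p e) (S.image p)).card + (T.image p).card ≤ (E.image p).card := by
      rw [← Finset.card_union_of_disjoint dp]
      apply Finset.card_le_card
      intro x hx
      simp only [Finset.mem_union, Finset.mem_insert, Finset.mem_image] at hx ⊢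
      rcases hx with (rfl | ⟨f, hf, rfl⟩) | ⟨f, hf, rfl⟩
      · exact ⟨e, heE, rfl⟩
      · exact ⟨f, (mS f hf).1, rfl⟩
      · exact ⟨f, (mT f hf).1, rfl⟩
    have cr : (S.image r).card + (insert (r e) (T.image r)).card ≤ (E.image r).card := by
      rw [← Finset.card_union_of_disjoint dr]
      apply Finset.card_le_card
      intro x hx
      simp only [Finset.mem_union, Finset.mem_insert, Finset.mem_image] at hx ⊢
      rcases hx with ⟨f, hf, rfl⟩ | rfl | ⟨f, hf, rfl⟩
      · exact ⟨f, (mS f hf).1, rfl⟩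
      · exact ⟨e, heE, rfl⟩
      · exact ⟨f, (mT f hf).1, rfl⟩
    omega

/-- summing the number of labels over the states -/
theorem count_labels {n : ℕ} (E : Finset ℕ) (q : ℕ → Fin n) (p : ℕ → Option (Fin n))
    (h : ∀ k ∈ E, ∀ l ∈ E, p k = some (q l) → p l = some (q k) → False) :
    2 * ∑ x : Fin n, ((E.filter (fun k => q k = x)).image p).card + n ≤ n * n + 2 * n := by
  classical
  set D : Finset (Fin n × Fin n) :=
    Finset.univ.filter (fun t => ∃ k ∈ E, q k = t.1 ∧ p k = some t.2) with hD
  have asym : ∀ a b, (a, b) ∈ D → (b, a) ∈ D → False := by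
    intro a b h1 h2
    simp only [hD, Finset.mem_filter, Finset.mem_univ, true_and] at h1 h2
    obtain ⟨k, hk, rfl, hpk⟩ := h1
    obtain ⟨l, hl, rfl, hpl⟩ := h2
    exact h k hk l hl hpk hpl
  have hD2 : 2 * D.card + n ≤ n * n := by
    have hdis : Disjoint D (D.image Prod.swap) := by
      rw [Finset.disjoint_left]
      rintro ⟨a, b⟩ h1 h2
      obtain ⟨⟨c, d⟩, h3, h4⟩ := Finset.mem_image.1 h2
      simp only [Prod.swap_prod_mk, Prod.mk.injEq] at h4
      obtain ⟨rfl, rfl⟩ := h4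
      exact asym _ _ h1 h3
    have hsub : D ∪ D.image Prod.swap ⊆ (Finset.univ : Finset (Fin n)).offDiag := by
      rintro ⟨a, b⟩ hab
      simp only [Finset.mem_offDiag, Finset.mem_univ, true_and]
      rintro rfl
      rcases Finset.mem_union.1 hab with h1 | h1
      · exact asym _ _ h1 h1
      · obtain ⟨⟨c, d⟩, h3, h4⟩ := Finset.mem_image.1 h1
        simp only [Prod.swap_prod_mk, Prod.mk.injEq] at h4
        obtain ⟨rfl, rfl⟩ := h4
        exact asym _ _ h3 h3
    have := Finset.card_le_card hsub
    rw [Finset.card_union_of_disjoint hdis,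
      Finset.card_image_of_injective _ Prod.swap_injective, Finset.offDiag_card] at this
    simp only [Finset.card_univ, Fintype.card_fin] at this
    have : n ≤ n * n := Nat.le_mul_self n
    omega
  have hsum : ∑ x : Fin n, ((E.filter (fun k => q k = x)).image p).card ≤ D.card + n := by
    have hDc : D.card = ∑ x : Fin n, (D.filter (fun t => t.1 = x)).card :=
      Finset.card_eq_sum_card_fiberwise (fun _ _ => Finset.mem_coe.2 (Finset.mem_univ _))
    have hn : n = ∑ x : Fin n, 1 := by simp
    have hn2 : D.card + n = ∑ x : Fin n, ((D.filter (fun t => t.1 = x)).card + 1) := by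
      rw [Finset.sum_add_distrib, ← hDc, ← hn]
    rw [hn2]
    apply Finset.sum_le_sum
    intro x _
    have hs : (E.filter (fun k => q k = x)).image p ⊆
        insert none ((D.filter (fun t => t.1 = x)).image (fun t => some t.2)) := by
      intro y hy
      obtain ⟨k, hk, rfl⟩ := Finset.mem_image.1 hy
      obtain ⟨hk, hq⟩ := Finset.mem_filter.1 hk
      cases hp : p k with
      | none => simp
      | some s =>
        apply Finset.mem_insert_of_mem
        apply Finset.mem_image.2
        refine ⟨(x, s), ?_, rfl⟩
        simp only [hD, Finset.mem_filter, Finset.mem_univ, true_and]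
        exact ⟨⟨k, hk, hq, hp⟩, trivial⟩
    calc _ ≤ _ := Finset.card_le_card hs
      _ ≤ _ := Finset.card_insert_le _ _
      _ ≤ _ := Nat.add_le_add_right Finset.card_image_le _
  omega

open Classical in
/-- state reached by `w` with its suffix `z` removed, `none` if `z` is not a suffix -/
noncomputable def st {A Q : Type} (M : PDFA A Q) (w z : List A) : Option Q :=
  if z <:+ w then ev M (w.take (w.length - z.length)) else none

theorem st_append {A Q : Type} (M : PDFA A Q) (u z : List A) : st M (u ++ z) z = ev M u := by
  simp [st]

theorem split_word {A : Type} (γ : List A) {k l : ℕ} (h : k < l) (hl : l ≤ γ.length) :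
    ∃ y, y ≠ [] ∧ γ.take l = γ.take k ++ y ∧ γ.drop k = y ++ γ.drop l := by
  refine ⟨(γ.take l).drop k, ?_, ?_, ?_⟩
  · intro h0
    have := congrArg List.length h0
    simp at this
    omega
  · conv_lhs => rw [← List.take_append_drop k (γ.take l)]
    rw [List.take_take, min_eq_left h.le]
  · conv_lhs => rw [← List.take_append_drop l γ]
    rw [List.drop_append_of_le_length (by simp; omega)]

theorem rep {A Q : Type} {L : Set (List A)} (M : PDFA A Q) (hM : M.accepts = L)
    {τ z z' y : List A} (hτ : τ ∈ Pref L) (hz : z = y ++ z') (h : st M τ z = st M τ z') :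
    (¬ z <:+ τ ∧ ¬ z' <:+ τ) ∨ ∃ u, τ = u ++ z ∧ τ = (u ++ y) ++ z' ∧ ev M u = ev M (u ++ y) := by
  by_cases h1 : z <:+ τ
  · right
    obtain ⟨u, rfl⟩ := h1
    refine ⟨u, rfl, by rw [hz, List.append_assoc], ?_⟩
    rw [st_append, hz, ← List.append_assoc, st_append] at h
    exact h
  · left
    refine ⟨h1, fun h2 => ?_⟩
    obtain ⟨u, rfl⟩ := h2
    obtain ⟨q, hq⟩ := ev_some M hM z' hτ
    rw [st_append, hq] at h
    simp [st, h1] at h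

/-- asymmetry of the label relation -/
theorem asym_lt {A : Type} [LinearOrder A] {L : Set (List A)} (hW : IsWheelerLang L)
    {n : ℕ} (M : PDFA A (Fin n)) (hM : M.accepts = L) {τ γ : List A} (hτ : τ ∈ Pref L)
    (hγ : γ ∈ Pref L) (hne : rc L τ ≠ rc L γ) {k l : ℕ} (hkl : k ≤ l) (hl : l ≤ γ.length)
    (h1 : st M τ (γ.drop k) = ev M (γ.take l)) (h2 : st M τ (γ.drop l) = ev M (γ.take k)) :
    False := by
  have suf : ∀ m, (∃ q, st M τ (γ.drop m) = some q) → ∃ u, τ = u ++ γ.drop m := by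
    rintro m ⟨q, hq⟩
    by_cases h : γ.drop m <:+ τ
    · obtain ⟨u, hu⟩ := h; exact ⟨u, hu.symm⟩
    · simp [st, h] at hq
  have evs : ∀ m, ∃ q, ev M (γ.take m) = some q := fun m =>
    ev_some M hM (γ.drop m) (by rwa [List.take_append_drop])
  obtain ⟨u, hu⟩ := suf k (by rw [h1]; exact evs l)
  have e1 : ev M u = ev M (γ.take l) := by rw [← h1]; conv_rhs => rw [hu]
                                           rw [st_append]
  rcases hkl.eq_or_lt with rfl | hkl
  · apply hne
    have := rc_of_ev M hM (ev_congr M (γ.drop k) e1)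
    rwa [List.take_append_drop, ← hu] at this
  · obtain ⟨y, hy, hy1, hy2⟩ := split_word γ hkl hl
    have hu' : τ = (u ++ y) ++ γ.drop l := by rw [hu, hy2, List.append_assoc]
    have e2 : ev M (u ++ y) = ev M (γ.take k) := by
      rw [← h2]; conv_rhs => rw [hu']
      rw [st_append]
    set v := γ.take k with hv
    have e3 : ev M v = ev M (v ++ y ++ y) := by
      rw [← e2, ← hy1]; exact ev_congr M y e1
    have r1 : rc L τ = rc L (v ++ γ.drop l) := by
      rw [hu']; exact rc_of_ev M hM (ev_congr M _ e2)
    have r2 : v ++ y ++ γ.drop l = γ := by rw [← hy1, List.take_append_drop]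
    refine no_inc hW M hM (X := v) (Y := v ++ y) (y := y ++ y) (z := γ.drop l) ?_ ?_
      (pref_of_rc r1 hτ) (by rwa [r2]) (by rwa [r2, ← r1]) ?_
    · rw [e3, List.append_assoc]
    · rw [← List.append_assoc]; exact ev_congr M y e3
    · rcases colex_loop hy v with h | h
      · left; refine ⟨h, ?_⟩
        rw [← List.append_assoc, colex_append]; exact h
      · right; refine ⟨h, ?_⟩
        rw [← List.append_assoc, colex_append]; exact h

theorem asym_any {A : Type} [LinearOrder A] {L : Set (List A)} (hW : IsWheelerLang L)
    {n : ℕ} (M : PDFA A (Fin n)) (hM : M.accepts = L) {τ γ : List A} (hτ : τ ∈ Pref L)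
    (hγ : γ ∈ Pref L) (hne : rc L τ ≠ rc L γ) {k l : ℕ} (hk : k ≤ γ.length) (hl : l ≤ γ.length)
    (h1 : st M τ (γ.drop k) = ev M (γ.take l)) (h2 : st M τ (γ.drop l) = ev M (γ.take k)) :
    False := by
  rcases le_total k l with h | h
  · exact asym_lt hW M hM hτ hγ hne h hl h1 h2
  · exact asym_lt hW M hM hτ hγ hne h hk h2 h1

theorem colex_of_not {A : Type} [LinearOrder A] {x y z : List A} (h : ¬ Colex x y)
    (h2 : Colex x z) : Colex y z := by
  rcases colex_total x y with h' | rfl | h'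
  · exact absurd h' h
  · exact h2
  · exact colex_trans h' h2

theorem colex_of_not' {A : Type} [LinearOrder A] {x y z : List A} (h : ¬ Colex x y)
    (h2 : Colex z y) : Colex z x := by
  rcases colex_total x y with hyx | rfl | hyx
  · exact absurd hyx h
  · exact h2
  · exact colex_trans h2 hyx

/-- A shortest word between `α` and `β`, inequivalent to both, has length less than `n + n²`. -/
theorem short_between {A : Type} [LinearOrder A] {L : Set (List A)} (hW : IsWheelerLang L)
    {n : ℕ} (M : PDFA A (Fin n)) (hM : M.accepts = L) {α β γ : List A} (hα : α ∈ Pref L)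
    (hβ : β ∈ Pref L) (hγ : γ ∈ Pref L) (hneα : rc L α ≠ rc L γ) (hneβ : rc L β ≠ rc L γ)
    (hαγ : Colex α γ) (hγβ : Colex γ β)
    (hmin : ∀ γ', rc L γ' = rc L γ → Colex α γ' → Colex γ' β → γ.length ≤ γ'.length) :
    γ.length + 1 ≤ n + n ^ 2 := by
  classical
  have evs : ∀ m, ∃ q, ev M (γ.take m) = some q := fun m =>
    ev_some M hM (γ.drop m) (by rwa [List.take_append_drop])
  choose q hq using evs
  set p : ℕ → Option (Fin n) := fun k => st M α (γ.drop k) with hp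
  set r : ℕ → Option (Fin n) := fun k => st M β (γ.drop k) with hr
  let Bel : ℕ → List A → Prop := fun k η => ∀ u, α = u ++ γ.drop k → Colex u η
  let Abv : ℕ → List A → Prop := fun k η => ∀ w, β = w ++ γ.drop k → Colex η w
  have belSelf : ∀ k, Bel k (γ.take k) := by
    intro k u hu
    rw [← colex_append _ _ (γ.drop k), List.take_append_drop, ← hu]; exact hαγ
  have abvSelf : ∀ k, Abv k (γ.take k) := by
    intro k u hu
    rw [← colex_append _ _ (γ.drop k), List.take_append_drop, ← hu]; exact hγβ
  have belUse : ∀ k η, Bel k η → Colex α (η ++ γ.drop k) := by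
    intro k η h
    by_cases hs : γ.drop k <:+ α
    · obtain ⟨u, hu⟩ := hs
      have := h u hu.symm
      rw [← hu, colex_append]; exact this
    · apply colex_not_suffix_left (g := γ.take k) _ hs
      rw [List.take_append_drop]; exact hαγ
  have abvUse : ∀ k η, Abv k η → Colex (η ++ γ.drop k) β := by
    intro k η h
    by_cases hs : γ.drop k <:+ β
    · obtain ⟨u, hu⟩ := hs
      have := h u hu.symm
      rw [← hu, colex_append]; exact this
    · apply colex_not_suffix_right (g := γ.take k) _ hs
      rw [List.take_append_drop]; exact hγβ
  have H1 : ∀ k l, k < l → l ≤ γ.length → q k = q l → Bel l (γ.take k) → Abv l (γ.take k) →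
      False := by
    intro k l hkl hl hqe hb ha
    have h1 : rc L (γ.take k ++ γ.drop l) = rc L γ := by
      conv_rhs => rw [← List.take_append_drop l γ]
      exact rc_of_ev M hM (ev_congr M _ (by rw [hq, hq, hqe]))
    have := hmin _ h1 (belUse _ _ hb) (abvUse _ _ ha)
    simp at this
    omega
  have H2 : ∀ k l, k < l → l ≤ γ.length → q k = q l → p k = p l →
      ¬ Abv l (γ.take k) ∧ Bel k (γ.take l) ∧ Abv k (γ.take l) := by
    intro k l hkl hl hqe hpe
    obtain ⟨y, hy, hy1, hy2⟩ := split_word γ hkl hl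
    rcases rep M hM hα hy2 hpe with ⟨n1, n2⟩ | ⟨u, u1, u2, hu⟩
    · have b1 : ∀ η, Bel k η := fun η u hu => absurd ⟨u, hu.symm⟩ n1
      have b2 : ∀ η, Bel l η := fun η u hu => absurd ⟨u, hu.symm⟩ n2
      have na : ¬ Abv l (γ.take k) := fun h => H1 k l hkl hl hqe (b2 _) h
      refine ⟨na, b1 _, ?_⟩
      intro w hw
      have hw' : β = (w ++ y) ++ γ.drop l := by rw [hw, hy2, List.append_assoc]
      have na' : ¬ Colex (γ.take k) (w ++ y) := by
        intro h
        apply na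
        intro w' h'
        have : w' = w ++ y := List.append_cancel_right (h'.symm.trans hw')
        rw [this]; exact h
      have := abvSelf l _ hw'
      exact colex_trans (colex_of_not' na' this) (abvSelf k _ hw)
    · have sep := loop_sep hW M hM (u := u) (v := γ.take k) (z := γ.drop k) hy hu
        (by rw [← hy1, hq, hq, hqe]) (by rwa [← u1]) (by rwa [List.take_append_drop])
        (by rwa [← u1, List.take_append_drop]) (belSelf k u u1)
      rw [← hy1] at sep
      have b1 : Bel l (γ.take k) := by
        intro u' hu'
        have : u' = u ++ y := List.append_cancel_right (hu'.symm.trans u2)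
        rw [this]
        exact colex_trans (belSelf l _ u2) sep.2
      refine ⟨fun h => H1 k l hkl hl hqe b1 h, ?_, ?_⟩
      · intro u' hu'
        have : u' = u := List.append_cancel_right (hu'.symm.trans u1)
        rw [this]
        exact colex_trans sep.1 (belSelf l _ u2)
      · intro w hw
        exact colex_trans sep.2 (abvSelf k _ hw)
  have H3 : ∀ k l, k < l → l ≤ γ.length → q k = q l → r k = r l →
      Abv l (γ.take k) ∧ Bel k (γ.take l) ∧ Abv k (γ.take l) := by
    intro k l hkl hl hqe hpe
    obtain ⟨y, hy, hy1, hy2⟩ := split_word γ hkl hl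
    rcases rep M hM hβ hy2 hpe with ⟨n1, n2⟩ | ⟨u, u1, u2, hu⟩
    · have b1 : ∀ η, Abv k η := fun η u hu => absurd ⟨u, hu.symm⟩ n1
      have b2 : ∀ η, Abv l η := fun η u hu => absurd ⟨u, hu.symm⟩ n2
      have na : ¬ Bel l (γ.take k) := fun h => H1 k l hkl hl hqe h (b2 _)
      refine ⟨b2 _, ?_, b1 _⟩
      intro w hw
      have hw' : α = (w ++ y) ++ γ.drop l := by rw [hw, hy2, List.append_assoc]
      have na' : ¬ Colex (w ++ y) (γ.take k) := by
        intro h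
        apply na
        intro w' h'
        have : w' = w ++ y := List.append_cancel_right (h'.symm.trans hw')
        rw [this]; exact h
      have := belSelf l _ hw'
      exact colex_trans (belSelf k _ hw) (colex_of_not na' this)
    · have sep := loop_sep hW M hM (u := γ.take k) (v := u) (z := γ.drop k) hy
        (by rw [← hy1, hq, hq, hqe]) hu (by rwa [List.take_append_drop]) (by rwa [← u1])
        (by rw [← u1, List.take_append_drop]; exact hneβ.symm) (abvSelf k u u1)
      rw [← hy1] at sep
      refine ⟨?_, ?_, ?_⟩
      · intro u' hu'
        have : u' = u ++ y := List.append_cancel_right (hu'.symm.trans u2)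
        rw [this]
        exact colex_trans sep.1 (abvSelf l _ u2)
      · intro w hw
        exact colex_trans (belSelf k _ hw) sep.1
      · intro u' hu'
        have : u' = u := List.append_cancel_right (hu'.symm.trans u1)
        rw [this]
        exact colex_trans (abvSelf l _ u2) sep.2
  set E := Finset.range (γ.length + 1) with hE
  have mE : ∀ k ∈ E, k ≤ γ.length := fun k hk => by
    have := Finset.mem_range.1 hk; omega
  have core : ∀ x : Fin n, (E.filter (fun k => q k = x)).card ≤
      ((E.filter (fun k => q k = x)).image p).card +
      ((E.filter (fun k => q k = x)).image r).card := by
    intro x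
    rcases (E.filter (fun k => q k = x)).eq_empty_or_nonempty with h0 | h0
    · rw [h0]; simp
    have mm : ∀ k ∈ E.filter (fun k => q k = x), k ≤ γ.length ∧ q k = x := fun k hk =>
      ⟨mE k (Finset.mem_filter.1 hk).1, (Finset.mem_filter.1 hk).2⟩
    have := count_core p r (fun e f => ¬ Abv f (γ.take e)) _ _ le_rfl h0 ?_ ?_ ?_
    · omega
    · intro e he f hf hef hpe
      exact (H2 e f hef (mm f hf).1 ((mm e he).2.trans (mm f hf).2.symm) hpe).1
    · intro e he f hf hef hpe hn
      exact hn (H3 e f hef (mm f hf).1 ((mm e he).2.trans (mm f hf).2.symm) hpe).1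
    · intro e he f hf g hg hef heg hLf hRt
      have hRt : Abv g (γ.take e) := not_not.1 hRt
      have nb : ¬ Bel g (γ.take e) := fun h =>
        H1 e g heg (mm g hg).1 ((mm e he).2.trans (mm g hg).2.symm) h hRt
      have hfg : f ≠ g := by rintro rfl; exact hLf hRt
      simp only [Abv, Bel, not_forall] at hLf nb
      obtain ⟨w, hw, hLf⟩ := hLf
      obtain ⟨u, hu, nb⟩ := nb
      have hqfg : q f = q g := (mm f hf).2.trans (mm g hg).2.symm
      have c1 : f < g → Abv f (γ.take g) → False := by
        intro _ h
        have a1 := colex_of_not' hLf (h w hw)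
        have a2 := colex_of_not nb (belSelf g u hu)
        exact colex_irrefl (colex_trans a1 a2)
      have c2 : g < f → Bel g (γ.take f) → False := by
        intro _ h
        have a1 := colex_of_not nb (h u hu)
        have a2 := colex_of_not' hLf (abvSelf f w hw)
        exact colex_irrefl (colex_trans a1 a2)
      rcases lt_or_gt_of_ne hfg with hlt | hlt
      · exact ⟨fun h => c1 hlt (H2 f g hlt (mm g hg).1 hqfg h).2.2,
          fun h => c1 hlt (H3 f g hlt (mm g hg).1 hqfg h).2.2⟩
      · exact ⟨fun h => c2 hlt (H2 g f hlt (mm f hf).1 hqfg.symm h.symm).2.1,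
          fun h => c2 hlt (H3 g f hlt (mm f hf).1 hqfg.symm h.symm).2.1⟩
  have hcard : γ.length + 1 = ∑ x : Fin n, (E.filter (fun k => q k = x)).card := by
    have h1 : E.card = ∑ x : Fin n, (E.filter (fun k => q k = x)).card :=
      Finset.card_eq_sum_card_fiberwise (fun _ _ => Finset.mem_coe.2 (Finset.mem_univ _))
    rw [← h1, hE, Finset.card_range]
  have hsum := Finset.sum_le_sum (fun x (_ : x ∈ (Finset.univ : Finset (Fin n))) => core x)
  rw [← hcard, Finset.sum_add_distrib] at hsum
  have l1 := count_labels E q p (fun k hk l hl h1 h2 =>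
    asym_any hW M hM hα hγ hneα (mE k hk) (mE l hl) (h1.trans (hq l).symm) (h2.trans (hq k).symm))
  have l2 := count_labels E q r (fun k hk l hl h1 h2 =>
    asym_any hW M hM hβ hγ hneβ (mE k hk) (mE l hl) (h1.trans (hq l).symm) (h2.trans (hq k).symm))
  rw [pow_two]
  omega

theorem exists_short {A : Type} [LinearOrder A] {L : Set (List A)} (hW : IsWheelerLang L)
    {n : ℕ} (M : PDFA A (Fin n)) (hM : M.accepts = L) {α β γ : List A} (hα : α ∈ Pref L)
    (hβ : β ∈ Pref L) (hγ : γ ∈ Pref L) (hneα : rc L α ≠ rc L γ) (hneβ : rc L β ≠ rc L γ)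
    (hαγ : Colex α γ) (hγβ : Colex γ β) :
    ∃ γ' ∈ Pref L, Colex α γ' ∧ Colex γ' β ∧ γ'.length ≤ n + n ^ 2 := by
  classical
  have hex : ∃ m, ∃ γ', rc L γ' = rc L γ ∧ Colex α γ' ∧ Colex γ' β ∧ γ'.length = m :=
    ⟨_, γ, rfl, hαγ, hγβ, rfl⟩
  obtain ⟨γ', h1, h2, h3, h4⟩ := Nat.find_spec hex
  have hp := pref_of_rc h1.symm hγ
  refine ⟨γ', hp, h2, h3, ?_⟩
  have := short_between hW M hM hα hβ hp (by rwa [h1]) (by rwa [h1]) h2 h3 (by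
    intro γ'' e1 e2 e3
    rw [h4]
    exact Nat.find_min' hex ⟨γ'', e1.trans h1, e2, e3, rfl⟩)
  omega

end Helpers

section Statement19

/-- listing `Pref(L)^{≤d}` (`d = n + n²`, `n` the size of the
minimum DFA of the Wheeler language `L`) in co-lexicographic order, two
consecutive words are `≡^c_L`-equivalent iff they are Myhill–Nerode equivalent
and end with the same character. -/
theorem statement19 {A : Type} [Fintype A] [LinearOrder A]
    (L : Set (List A)) (hW : IsWheelerLang L)
    {n : ℕ} (M : PDFA A (Fin n)) (hacc : M.accepts = L)
    (hmin : ∀ (m : ℕ) (M' : PDFA A (Fin m)), M'.accepts = L → n ≤ m)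
    (d : ℕ) (hd : d = n + n ^ 2)
    (k : ℕ) (α : Fin k → List A)
    (hmem : ∀ i, α i ∈ Pref L ∧ (α i).length ≤ d)
    (hsorted : ∀ i j : Fin k, i < j → Colex (α i) (α j))
    (hcomplete : ∀ w ∈ Pref L, w.length ≤ d → ∃ i, α i = w) :
    ∀ (j : ℕ) (h1 : j < k) (h2 : j + 1 < k),
      (EquivC L (α ⟨j, h1⟩) (α ⟨j + 1, h2⟩) ↔
        (rc L (α ⟨j, h1⟩) = rc L (α ⟨j + 1, h2⟩) ∧
         (α ⟨j, h1⟩).getLast? = (α ⟨j + 1, h2⟩).getLast?)) := by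
  intro j h1 h2
  constructor
  · intro h
    exact ⟨h.1, h.2.1⟩
  · rintro ⟨hrc, hlast⟩
    refine ⟨hrc, hlast, ?_⟩
    have hab : Colex (α ⟨j, h1⟩) (α ⟨j + 1, h2⟩) := hsorted _ _ (by simp)
    intro γ hγ hbet
    by_contra hne
    have hne' : rc L γ ≠ rc L (α ⟨j + 1, h2⟩) := by rwa [← hrc]
    have hst : Colex (α ⟨j, h1⟩) γ ∧ Colex γ (α ⟨j + 1, h2⟩) := by
      rcases hbet with ⟨ha | ha, hb | hb⟩ | ⟨ha | ha, hb | hb⟩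
      · exact ⟨ha, hb⟩
      · exact absurd (by rw [hb]) hne'
      · exact absurd (by rw [ha]) hne
      · exact absurd (by rw [ha]) hne
      · exact absurd (colex_trans hab (colex_trans ha hb)) colex_irrefl
      · exact absurd (by rw [hb]) hne
      · exact absurd (by rw [ha]) hne'
      · exact absurd (by rw [hb]) hne
    obtain ⟨γ', hp, ha, hb, hlen⟩ := exists_short hW M hacc (hmem _).1 (hmem _).1 hγ
      (Ne.symm hne) (Ne.symm hne') hst.1 hst.2
    obtain ⟨i, rfl⟩ := hcomplete γ' hp (by rw [hd]; exact hlen)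
    have mono : ∀ a b : Fin k, Colex (α a) (α b) → a < b := by
      intro a b hc
      rcases lt_trichotomy a b with h | h | h
      · exact h
      · rw [h] at hc; exact absurd hc colex_irrefl
      · exact absurd (colex_trans hc (hsorted _ _ h)) colex_irrefl
    have e1 := Fin.lt_def.1 (mono _ _ ha)
    have e2 := Fin.lt_def.1 (mono _ _ hb)
    simp only at e1 e2
    omega

end Statement19

end WheelerPaper
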